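/- arXiv:1102.4188 — 5 statements merged into one kernel-verified Lean document; each statement's English description precedes it below -/
import Mathlib

section
/- Let n = a + b = x + y + z for natural numbers a, b, x, y, z, let μ be a nonzero complex number, let ρ be a complex number with ρ³ = 1, let B be an invertible n×n complex matrix, let D be the n×n diagonal matrix with diagonal blocks (I_x, ρ²·I_y, ρ·I_z), and let E be the n×n diagonal matrix with diagonal blocks (I_a, −I_b). Define X₁ = μ·B⁻¹·D·B·E and X₂ = μ·E·B⁻¹·D·B. Then X₁ and X₂ are invertible, they satisfy the braid relation X₁X₂X₁ = X₂X₁X₂, in fact X₁X₂X₁ = X₂X₁X₂ = μ³·E, and (X₁X₂)³ = μ⁶·I_n. -/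
open Matrix

/-- The block-diagonal matrix `diag(I_x, ρ²·I_y, ρ·I_z)` on `Fin n` (where `x + y + z = n`). -/
noncomputable def stdD (n x y : ℕ) (ρ : ℂ) : Matrix (Fin n) (Fin n) ℂ :=
  Matrix.diagonal fun i => if (i : ℕ) < x then 1 else if (i : ℕ) < x + y then ρ ^ 2 else ρ

/-- The block-diagonal matrix `diag(I_a, −I_b)` on `Fin n` (where `a + b = n`). -/
noncomputable def stdE (n a : ℕ) : Matrix (Fin n) (Fin n) ℂ :=
  Matrix.diagonal fun i => if (i : ℕ) < a then (1 : ℂ) else -1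

/-!
With `C = B⁻¹DB`, the pair is `X₁ = μCE`, `X₂ = μEC` with `C³ = 1` and `E² = 1`: a representation
of `ℤ/3 * ℤ/2 ≅ PSL₂(ℤ)`, the quotient of `B₃` by its centre, twisted by the scalar `μ`.
Since `E² = 1`, `X₁X₂ = μ²C²`; one more factor completes `C³ = 1` and leaves `μ³E`.
-/

section Monoid

variable {R A : Type*} [Monoid R] [Monoid A] [MulAction R A]
  [IsScalarTower R A A] [SMulCommClass R A A]

theorem smul_mul_mul_smul_mul_of_sq_eq_one (μ : R) (c : A) {e : A} (he : e ^ 2 = 1) :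
    (μ • (c * e)) * (μ • (e * c)) = μ ^ 2 • c ^ 2 := by
  have cancel : c * e * (e * c) = c ^ 2 := by
    rw [mul_assoc, ← mul_assoc e, ← sq e, he, one_mul, sq]
  rw [smul_mul_smul_comm, cancel, ← sq]

theorem standard_form_is_braid_representation_general {μ : R} (hμ : IsUnit μ)
    {c e : A} (hc : c ^ 3 = 1) (he : e ^ 2 = 1) :
    let X₁ := μ • (c * e)
    let X₂ := μ • (e * c)
    IsUnit X₁ ∧ IsUnit X₂ ∧
      X₁ * X₂ * X₁ = X₂ * X₁ * X₂ ∧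
      X₁ * X₂ * X₁ = μ ^ 3 • e ∧
      (X₁ * X₂) ^ 3 = μ ^ 6 • (1 : A) := by
  intro X₁ X₂
  have hc_unit : IsUnit c := .of_pow_eq_one hc three_ne_zero
  have he_unit : IsUnit e := .of_pow_eq_one he two_ne_zero
  have h₁₂ : X₁ * X₂ = μ ^ 2 • c ^ 2 := smul_mul_mul_smul_mul_of_sq_eq_one μ c he
  have h₁₂₁ : X₁ * X₂ * X₁ = μ ^ 3 • e := by
    rw [h₁₂, smul_mul_smul_comm, ← pow_succ, ← mul_assoc, ← pow_succ, hc, one_mul]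
  have h₂₁₂ : X₂ * X₁ * X₂ = μ ^ 3 • e := by
    rw [mul_assoc, h₁₂, smul_mul_smul_comm, ← pow_succ', mul_assoc, ← pow_succ', hc, mul_one]
  have h_pow : (X₁ * X₂) ^ 3 = μ ^ 6 • (1 : A) := by
    rw [h₁₂, smul_pow, ← pow_mul, pow_right_comm, hc, one_pow]
  exact ⟨(hc_unit.mul he_unit).smul hμ.unit, (he_unit.mul hc_unit).smul hμ.unit,
    h₁₂₁.trans h₂₁₂.symm, h₁₂₁, h_pow⟩

end Monoid

section Matrix

variable {m R : Type*} [Fintype m] [DecidableEq m]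

theorem diagonal_pow_eq_one [Semiring R] {v : m → R} {k : ℕ} (hv : v ^ k = 1) :
    diagonal v ^ k = 1 := by
  rw [diagonal_pow, hv, diagonal_one']

theorem inv_mul_mul_pow_eq_one [CommRing R] {B M : Matrix m m R} {k : ℕ}
    (hB : IsUnit B) (hM : M ^ k = 1) : (B⁻¹ * M * B) ^ k = 1 := by
  obtain ⟨U, rfl⟩ := hB
  rw [← coe_units_inv, Units.conj_pow', hM, mul_one, Units.inv_mul]

end Matrix

theorem stdD_pow_three (n x y : ℕ) {ρ : ℂ} (hρ : ρ ^ 3 = 1) : stdD n x y ρ ^ 3 = 1 := by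
  refine diagonal_pow_eq_one (funext fun i => ?_)
  simp only [Pi.pow_apply, Pi.one_apply]
  split_ifs
  · exact one_pow 3
  · rw [pow_right_comm, hρ, one_pow]
  · exact hρ

theorem stdE_sq (n a : ℕ) : stdE n a ^ 2 = 1 := by
  refine diagonal_pow_eq_one (funext fun i => ?_)
  simp only [Pi.pow_apply, Pi.one_apply]
  split_ifs
  · exact one_pow 2
  · exact neg_one_sq

theorem standard_form_is_braid_representation
    (a b x y z n : ℕ) (hab : a + b = n) (hxyz : x + y + z = n)
    (μ ρ : ℂ) (hμ : μ ≠ 0) (hρ : ρ ^ 3 = 1)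
    (B : Matrix (Fin n) (Fin n) ℂ) (hB : IsUnit B) :
    let D := stdD n x y ρ
    let E := stdE n a
    let X₁ := μ • (B⁻¹ * D * B * E)
    let X₂ := μ • (E * (B⁻¹ * D * B))
    IsUnit X₁ ∧ IsUnit X₂ ∧
      X₁ * X₂ * X₁ = X₂ * X₁ * X₂ ∧
      X₁ * X₂ * X₁ = μ ^ 3 • E ∧
      (X₁ * X₂) ^ 3 = μ ^ 6 • (1 : Matrix (Fin n) (Fin n) ℂ) :=
  standard_form_is_braid_representation_general hμ.isUnit
    (inv_mul_mul_pow_eq_one hB (stdD_pow_three n x y hρ)) (stdE_sq n a)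
end

section
/- There exist invertible 6×6 complex matrices X₁ and X₂ satisfying the braid relation X₁X₂X₁ = X₂X₁X₂ such that trace(X₁⁻²·X₂·X₁⁻¹·X₂·X₁⁻¹·X₂²) ≠ trace(X₂²·X₁⁻¹·X₂·X₁⁻¹·X₂·X₁⁻²). That is, there is a 6-dimensional representation of the three string braid group B₃ that separates the braid b = σ₁⁻²σ₂σ₁⁻¹σ₂σ₁⁻¹σ₂² from its reversed braid b' = σ₂²σ₁⁻¹σ₂σ₁⁻¹σ₂σ₁⁻² by traces. -/
open Matrix

/-!
The braid group has the presentation `B₃ = ⟨s, t | s² = t³⟩`, where `σ₁ = t⁻¹s` and `σ₂ = s⁻¹t²`,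
so matrices of the same size with `s² = 1 = t³` give a representation.
The braid `b` is a positive word in `σ₁⁻¹` and `σ₂`, and its reverse `b'` is the same word with
these two letters exchanged. We take `s` and `t` in `GL₆(ℤ)` for which the traces of `b` and `b'`
are the consecutive integers `2` and `1`; these remain distinct in every nontrivial commutative
ring.
-/

theorem braid_relation_of_sq_eq_cube {G : Type*} [Group G] {s t : G} (h : s ^ 2 = t ^ 3) :
    (t⁻¹ * s) * (s⁻¹ * t ^ 2) * (t⁻¹ * s) = (s⁻¹ * t ^ 2) * (t⁻¹ * s) * (s⁻¹ * t ^ 2) := by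
  calc (t⁻¹ * s) * (s⁻¹ * t ^ 2) * (t⁻¹ * s)
      = s⁻¹ * s ^ 2 := by group
    _ = s⁻¹ * t ^ 3 := by rw [h]
    _ = (s⁻¹ * t ^ 2) * (t⁻¹ * s) * (s⁻¹ * t ^ 2) := by group

/-- The word whose value at `(σ₁⁻¹, σ₂)` is the braid `b` with closure `8₁₇`, and whose value at
`(σ₂, σ₁⁻¹)` is the reversed braid `b'`. -/
def word817 {M : Type*} [Monoid M] (x y : M) : M :=
  x ^ 2 * y * x * y * x * y ^ 2

theorem map_word817 {M N : Type*} [Monoid M] [Monoid N] (f : M →* N) (x y : M) :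
    f (word817 x y) = word817 (f x) (f y) := by
  simp only [word817, map_mul, map_pow]

theorem trace_word817_map {n R S : Type*} [Fintype n] [DecidableEq n] [CommRing R] [CommRing S]
    (f : R →+* S) (g h : GL n R) :
    trace (word817 (GeneralLinearGroup.map f g).val (GeneralLinearGroup.map f h).val) =
      f (trace (word817 g h).val) := by
  let φ : GL n R →* Matrix n n S := (Units.coeHom _).comp (GeneralLinearGroup.map f)
  calc trace (word817 (φ g) (φ h))
      = trace (φ (word817 g h)) := by rw [map_word817]
    _ = f (trace (word817 g h).val) := (AddMonoidHom.map_trace f _).symm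

/-- The image of the generator `s` of `B₃ = ⟨s, t | s² = t³⟩` in `GL₆(ℤ)`: an involution
found by computer search, sparse and with the traces of `b` and `b'` differing by `1`. -/
def orderTwoGL : GL (Fin 6) ℤ :=
  let S : Matrix (Fin 6) (Fin 6) ℤ :=
    !![0, 1, 0, 0, 0, 0;
       1, 0, 0, 0, 0, 0;
       0, 0, 0, 1, 0, 0;
       0, 0, 1, 0, 0, 0;
       0, 0, 0, 0, 1, 0;
       0, 0, 1, 1, 1, -1]
  ⟨S, S, by decide +kernel, by decide +kernel⟩

/-- The image of the generator `t` of `B₃ = ⟨s, t | s² = t³⟩` in `GL₆(ℤ)`: the permutation matrix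
of `(0 1 2)(3 4 5)`, with its transpose as inverse. -/
def orderThreeGL : GL (Fin 6) ℤ :=
  let T : Matrix (Fin 6) (Fin 6) ℤ :=
    !![0, 0, 1, 0, 0, 0;
       1, 0, 0, 0, 0, 0;
       0, 1, 0, 0, 0, 0;
       0, 0, 0, 0, 0, 1;
       0, 0, 0, 1, 0, 0;
       0, 0, 0, 0, 1, 0]
  ⟨T, Tᵀ, by decide +kernel, by decide +kernel⟩

theorem orderTwoGL_sq : orderTwoGL ^ 2 = 1 := by decide +kernel

theorem orderThreeGL_cube : orderThreeGL ^ 3 = 1 := by decide +kernel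

/-- The image of `σ₁ = t⁻¹s` under the representation of `B₃` in `GL₆(ℤ)`. -/
def sigmaOneGL : GL (Fin 6) ℤ := orderThreeGL⁻¹ * orderTwoGL

/-- The image of `σ₂ = s⁻¹t²` under the representation of `B₃` in `GL₆(ℤ)`. -/
def sigmaTwoGL : GL (Fin 6) ℤ := orderTwoGL⁻¹ * orderThreeGL ^ 2

theorem sigmaGL_braid_relation :
    sigmaOneGL * sigmaTwoGL * sigmaOneGL = sigmaTwoGL * sigmaOneGL * sigmaTwoGL :=
  braid_relation_of_sq_eq_cube (orderTwoGL_sq.trans orderThreeGL_cube.symm)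

theorem trace_word817_sigmaGL : trace (word817 sigmaOneGL⁻¹ sigmaTwoGL).val = 2 := by
  decide +kernel

theorem trace_word817_sigmaGL_swap : trace (word817 sigmaTwoGL sigmaOneGL⁻¹).val = 1 := by
  decide +kernel

theorem exists_six_dimensional_braid_rep_separating_b_from_reverse_general
    (R : Type*) [CommRing R] [Nontrivial R] :
    ∃ X₁ X₂ : Matrix (Fin 6) (Fin 6) R,
      IsUnit X₁ ∧ IsUnit X₂ ∧
      X₁ * X₂ * X₁ = X₂ * X₁ * X₂ ∧
      Matrix.trace (X₁⁻¹ ^ 2 * X₂ * X₁⁻¹ * X₂ * X₁⁻¹ * X₂ ^ 2) ≠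
        Matrix.trace (X₂ ^ 2 * X₁⁻¹ * X₂ * X₁⁻¹ * X₂ * X₁⁻¹ ^ 2) := by
  let φ : GL (Fin 6) ℤ →* GL (Fin 6) R := GeneralLinearGroup.map (Int.castRingHom R)
  refine ⟨φ sigmaOneGL, φ sigmaTwoGL, Units.isUnit _, Units.isUnit _, ?_, ?_⟩
  · simp only [← Units.val_mul, ← map_mul, sigmaGL_braid_relation]
  · rw [← coe_units_inv, ← map_inv]
    change trace (word817 (φ sigmaOneGL⁻¹).val (φ sigmaTwoGL).val) ≠
      trace (word817 (φ sigmaTwoGL).val (φ sigmaOneGL⁻¹).val)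
    rw [trace_word817_map, trace_word817_map, trace_word817_sigmaGL, trace_word817_sigmaGL_swap,
      map_ofNat, map_one, ← one_add_one_eq_two, ne_eq, add_eq_left]
    exact one_ne_zero

theorem exists_six_dimensional_braid_rep_separating_b_from_reverse :
    ∃ X₁ X₂ : Matrix (Fin 6) (Fin 6) ℂ,
      IsUnit X₁ ∧ IsUnit X₂ ∧
      X₁ * X₂ * X₁ = X₂ * X₁ * X₂ ∧
      Matrix.trace (X₁⁻¹ ^ 2 * X₂ * X₁⁻¹ * X₂ * X₁⁻¹ * X₂ ^ 2) ≠
        Matrix.trace (X₂ ^ 2 * X₁⁻¹ * X₂ * X₁⁻¹ * X₂ * X₁⁻¹ ^ 2) :=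
  exists_six_dimensional_braid_rep_separating_b_from_reverse_general ℂ
end

section
/- Let k ≥ 1 and let A be an invertible k×k complex matrix such that A − I_k is invertible, let B be the 2k×2k block matrix with block rows (I_k, I_k) and (A, I_k), and set Cᵗ = ((A − I_k)⁻¹)ᵀ = ((Aᵀ) − I_k)⁻¹. Then [block-diag(−(Aᵀ)⁻¹, I_k)] · (B⁻¹)ᵀ · [block-diag((Cᵗ)⁻¹·Aᵀ, −(Cᵗ)⁻¹)] is the 2k×2k block matrix with block rows (I_k, I_k) and (Aᵀ, I_k). In other words, (B⁻¹)ᵀ is equivalent under block-diagonal base change on both sides to the matrix of the same normal form with A replaced by Aᵀ. -/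
open Matrix

/-!
Write `X = Aᵀ`, so that `Bᵀ` has block rows `(1, X)` and `(1, 1)`, and `(Cᵗ)⁻¹ = X - 1`. The
right-hand base change is a multiple of `Bᵀ`:
`[1, X; 1, 1] * [-X, -X; X, 1] = block-diag ((X - 1) * X, -(X - 1))`.
Cancelling `Bᵀ`, which is invertible because its Schur complement is `1 - X`, leaves
`[-X, -X; X, 1]`, and scaling the first block row by `-X⁻¹` gives `[1, 1; X, 1]`.
-/

section

variable {n R : Type*} [Fintype n] [DecidableEq n]

theorem fromBlocks_one_self_mul_fromBlocks_neg_self [NonAssocRing R] (X : Matrix n n R) :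
    fromBlocks 1 X 1 1 * fromBlocks (-X) (-X) X 1 =
      fromBlocks ((X - 1) * X) 0 0 (-(X - 1)) := by
  simp only [fromBlocks_multiply, Matrix.sub_mul, Matrix.one_mul, Matrix.mul_one,
    Matrix.mul_neg, neg_add_cancel, neg_add_eq_sub, neg_sub]

variable [CommRing R]

theorem isUnit_fromBlocks_one₁₁_iff {m : Type*} [Fintype m] [DecidableEq m]
    {B : Matrix m n R} {C : Matrix n m R} {D : Matrix n n R} :
    IsUnit (fromBlocks 1 B C D) ↔ IsUnit (D - C * B) := by
  rw [isUnit_iff_isUnit_det, det_fromBlocks_one₁₁, isUnit_iff_isUnit_det]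

theorem inv_fromBlocks_one_self_mul_fromBlocks_diagonal {X : Matrix n n R}
    (hX : IsUnit (X - 1)) :
    (fromBlocks 1 X 1 1)⁻¹ * fromBlocks ((X - 1) * X) 0 0 (-(X - 1)) =
      fromBlocks (-X) (-X) X 1 := by
  have hunit : IsUnit (fromBlocks 1 X (1 : Matrix n n R) 1) := by
    rwa [isUnit_fromBlocks_one₁₁_iff, Matrix.one_mul, IsUnit.sub_iff]
  rw [← fromBlocks_one_self_mul_fromBlocks_neg_self,
    nonsing_inv_mul_cancel_left _ _ ((isUnit_iff_isUnit_det _).mp hunit)]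

theorem fromBlocks_neg_inv_mul_fromBlocks_neg_self {X : Matrix n n R} (hX : IsUnit X) :
    fromBlocks (-X⁻¹) 0 0 1 * fromBlocks (-X) (-X) X 1 = fromBlocks 1 1 X 1 := by
  have hinv : X⁻¹ * X = 1 := nonsing_inv_mul X ((isUnit_iff_isUnit_det X).mp hX)
  simp only [fromBlocks_multiply, neg_mul_neg, hinv, Matrix.zero_mul, Matrix.one_mul,
    add_zero, zero_add]

theorem inv_transpose_inv {M : Matrix n n R} (hM : IsUnit M) : ((M⁻¹)ᵀ)⁻¹ = Mᵀ := by
  rw [← transpose_nonsing_inv, nonsing_inv_nonsing_inv M ((isUnit_iff_isUnit_det M).mp hM)]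

theorem inverse_transpose_equivalent_to_transposed_normal_form_general
    {A : Matrix n n R} (hA : IsUnit A) (hA1 : IsUnit (A - 1)) :
    let B := fromBlocks (1 : Matrix n n R) 1 A 1
    let Ct := ((A - 1)⁻¹)ᵀ
    fromBlocks (-(Aᵀ)⁻¹) 0 0 1 * (B⁻¹)ᵀ * fromBlocks (Ct⁻¹ * Aᵀ) 0 0 (-Ct⁻¹) =
      fromBlocks (1 : Matrix n n R) 1 Aᵀ 1 := by
  intro B Ct
  have hB : (B⁻¹)ᵀ = (fromBlocks 1 Aᵀ 1 1)⁻¹ := by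
    rw [transpose_nonsing_inv, fromBlocks_transpose, transpose_one]
  have hCt : Ct⁻¹ = Aᵀ - 1 := by
    rw [inv_transpose_inv hA1, transpose_sub, transpose_one]
  have hAt : IsUnit Aᵀ := (isUnit_transpose A).mpr hA
  have hAt1 : IsUnit (Aᵀ - 1) := by
    rwa [← transpose_one, ← transpose_sub, isUnit_transpose]
  rw [hB, hCt, Matrix.mul_assoc, inv_fromBlocks_one_self_mul_fromBlocks_diagonal hAt1,
    fromBlocks_neg_inv_mul_fromBlocks_neg_self hAt]

end

theorem inverse_transpose_equivalent_to_transposed_normal_form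
    (k : ℕ) (hk : 1 ≤ k) (A : Matrix (Fin k) (Fin k) ℂ)
    (hA : IsUnit A) (hA1 : IsUnit (A - 1)) :
    let B := Matrix.fromBlocks (1 : Matrix (Fin k) (Fin k) ℂ) 1 A 1
    let Ct := ((A - 1)⁻¹)ᵀ
    Matrix.fromBlocks (-(Aᵀ)⁻¹) 0 0 1 * (B⁻¹)ᵀ *
        Matrix.fromBlocks (Ct⁻¹ * Aᵀ) 0 0 (-Ct⁻¹) =
      Matrix.fromBlocks (1 : Matrix (Fin k) (Fin k) ℂ) 1 Aᵀ 1 :=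
  inverse_transpose_equivalent_to_transposed_normal_form_general hA hA1
end

section
/- Let k ≥ 1 and let A be an invertible k×k complex matrix such that A − I_k is invertible and A is symmetric (Aᵀ = A), and let B be the 2k×2k block matrix with block rows (I_k, I_k) and (A, I_k). Then with C = (A − I_k)⁻¹, the matrix (B⁻¹)ᵀ equals the block matrix with block rows (−C, I_k + C) and (C, −C), and B = [block-diag(−A⁻¹, I_k)] · (B⁻¹)ᵀ · [block-diag(C⁻¹·A, −C⁻¹)]. Hence B and (B⁻¹)ᵀ lie in the same orbit under block-diagonal base change on both sides. -/
open Matrix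

/-!
Put `C = (A - 1)⁻¹`. Everything follows from `A * C = 1 + C`. The inverse transpose of
`(1, 1; Aᵀ, 1)` is the inverse of `(1, A; 1, 1)`, namely `(-C, 1 + C; C, -C)`. Multiplying the
columns of the latter on the right by `(A - 1) * A` and `-(A - 1)` gives `(-A, -A; A, 1)`, and
multiplying its first row on the left by `-A⁻¹` gives `(1, 1; A, 1)`. So inverse transposition acts
on these normal forms, up to block-diagonal base change, as `A ↦ Aᵀ`.
-/

section BlockNormalForm

variable {n R : Type*} [Fintype n] [DecidableEq n] [CommRing R] {A : Matrix n n R}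

theorem mul_inv_sub_one_eq_one_add (hA1 : IsUnit (A - 1)) :
    A * (A - 1)⁻¹ = 1 + (A - 1)⁻¹ :=
  calc
    A * (A - 1)⁻¹ = (A - 1) * (A - 1)⁻¹ + (A - 1)⁻¹ := by noncomm_ring
    _ = 1 + (A - 1)⁻¹ := by rw [mul_nonsing_inv _ ((isUnit_iff_isUnit_det _).1 hA1)]

theorem one_add_inv_sub_one_mul_sub_one (hA1 : IsUnit (A - 1)) :
    (1 + (A - 1)⁻¹) * (A - 1) = A := by
  rw [← mul_inv_sub_one_eq_one_add hA1,
    nonsing_inv_mul_cancel_right _ _ ((isUnit_iff_isUnit_det _).1 hA1)]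

theorem inv_fromBlocks_one_self_one_one (hA1 : IsUnit (A - 1)) :
    (fromBlocks 1 A 1 1)⁻¹ =
      fromBlocks (-(A - 1)⁻¹) (1 + (A - 1)⁻¹) (A - 1)⁻¹ (-(A - 1)⁻¹) := by
  apply inv_eq_right_inv
  rw [fromBlocks_multiply, ← fromBlocks_one]
  simp only [one_mul, mul_neg, mul_inv_sub_one_eq_one_add hA1]
  congr 1 <;> abel

theorem transpose_inv_fromBlocks_one_one_transpose_one (hA1 : IsUnit (A - 1)) :
    ((fromBlocks 1 1 Aᵀ 1)⁻¹)ᵀ =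
      fromBlocks (-(A - 1)⁻¹) (1 + (A - 1)⁻¹) (A - 1)⁻¹ (-(A - 1)⁻¹) := by
  rw [transpose_nonsing_inv, fromBlocks_transpose, transpose_transpose, transpose_one,
    inv_fromBlocks_one_self_one_one hA1]

theorem fromBlocks_one_one_self_one_eq_mul_mul (hA : IsUnit A) (hA1 : IsUnit (A - 1)) :
    fromBlocks 1 1 A 1 =
      fromBlocks (-A⁻¹) 0 0 1 *
        fromBlocks (-(A - 1)⁻¹) (1 + (A - 1)⁻¹) (A - 1)⁻¹ (-(A - 1)⁻¹) *
        fromBlocks ((A - 1) * A) 0 0 (-(A - 1)) := by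
  have hdet : IsUnit (A - 1).det := (isUnit_iff_isUnit_det _).1 hA1
  have inv_mul_A : A⁻¹ * A = 1 := nonsing_inv_mul _ ((isUnit_iff_isUnit_det _).1 hA)
  have right_mul :
      fromBlocks (-(A - 1)⁻¹) (1 + (A - 1)⁻¹) (A - 1)⁻¹ (-(A - 1)⁻¹) *
        fromBlocks ((A - 1) * A) 0 0 (-(A - 1)) = fromBlocks (-A) (-A) A 1 := by
    simp only [fromBlocks_multiply, mul_zero, add_zero, zero_add, neg_mul, mul_neg, neg_neg,
      nonsing_inv_mul_cancel_left _ _ hdet, nonsing_inv_mul _ hdet,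
      one_add_inv_sub_one_mul_sub_one hA1]
  rw [Matrix.mul_assoc, right_mul]
  simp only [fromBlocks_multiply, zero_mul, add_zero, zero_add, one_mul, neg_mul_neg, inv_mul_A]

theorem symmetric_normal_form_fixed_by_inverse_transpose_general
    (hA : IsUnit A) (hA1 : IsUnit (A - 1)) :
    let C := (A - 1)⁻¹
    ((fromBlocks 1 1 Aᵀ 1)⁻¹)ᵀ = fromBlocks (-C) (1 + C) C (-C) ∧
      fromBlocks 1 1 A 1 =
        fromBlocks (-A⁻¹) 0 0 1 * ((fromBlocks 1 1 Aᵀ 1)⁻¹)ᵀ *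
          fromBlocks (C⁻¹ * A) 0 0 (-C⁻¹) := by
  intro C
  have inv_C : C⁻¹ = A - 1 := nonsing_inv_nonsing_inv _ ((isUnit_iff_isUnit_det _).1 hA1)
  rw [transpose_inv_fromBlocks_one_one_transpose_one hA1, inv_C]
  exact ⟨rfl, fromBlocks_one_one_self_one_eq_mul_mul hA hA1⟩

end BlockNormalForm

theorem symmetric_normal_form_fixed_by_inverse_transpose
    (k : ℕ) (hk : 1 ≤ k) (A : Matrix (Fin k) (Fin k) ℂ)
    (hA : IsUnit A) (hA1 : IsUnit (A - 1)) (hsym : Aᵀ = A) :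
    let C := (A - 1)⁻¹
    let B := Matrix.fromBlocks (1 : Matrix (Fin k) (Fin k) ℂ) 1 A 1
    (B⁻¹)ᵀ = Matrix.fromBlocks (-C) (1 + C) C (-C) ∧
      B = Matrix.fromBlocks (-A⁻¹) 0 0 1 * (B⁻¹)ᵀ *
          Matrix.fromBlocks (C⁻¹ * A) 0 0 (-C⁻¹) := by
  simpa only [hsym] using symmetric_normal_form_fixed_by_inverse_transpose_general hA hA1
end

section
/- Let k ≥ 1 and consider 2k×2k complex matrices. For every B in the Zariski-dense set of invertible 2k×2k matrices whose blocks B₁₁, B₁₂, B₂₂ (k×k blocks, B written with block rows (B₁₁, B₁₂) and (B₂₁, B₂₂)) are invertible and whose associated normal-form matrix A = B₂₁·B₁₁⁻¹·B₁₂·B₂₂⁻¹ is invertible with A − I_k invertible and symmetric, the matrices B and (B⁻¹)ᵀ lie in the same orbit under two-sided multiplication by invertible block-diagonal matrices block-diag(N₁, I or N₂) and block-diag(M₁, M₂) with k×k blocks. -/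
open Matrix

/-!
Two-sided multiplication by invertible block-diagonal matrices brings `B` to the standard form with
block rows `(1, 1)` and `(A, 1)`, where `A = B₂₁ B₁₁⁻¹ B₁₂ B₂₂⁻¹`, and `A` may be replaced by any
conjugate. The map `B ↦ (B⁻¹)ᵀ` respects orbits. Applied to the standard form of `A` it gives a
matrix whose own standard form is that of `Aᵀ`. So the orbits of `B` and `(B⁻¹)ᵀ` agree as soon as
`A` is conjugate to `Aᵀ`.
-/

section BlockDiagonalOrbits

variable {m n R : Type*} [Fintype m] [Fintype n] [DecidableEq m] [DecidableEq n] [CommRing R]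

/-- `BlockDiagEquiv B B'` says that `B` and `B'` lie in the same orbit under two-sided
multiplication by invertible block-diagonal matrices. The block sizes `m` and `n` may differ. -/
def BlockDiagEquiv (B B' : Matrix (m ⊕ n) (m ⊕ n) R) : Prop :=
  ∃ (N₁ : Matrix m m R) (N₂ : Matrix n n R) (M₁ : Matrix m m R) (M₂ : Matrix n n R),
    IsUnit N₁ ∧ IsUnit N₂ ∧ IsUnit M₁ ∧ IsUnit M₂ ∧
    B' = fromBlocks N₁ 0 0 N₂ * B * fromBlocks M₁ 0 0 M₂

theorem inv_fromBlocks_zero_zero {P : Matrix m m R} {Q : Matrix n n R}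
    (hP : IsUnit P) (hQ : IsUnit Q) :
    (fromBlocks P 0 0 Q)⁻¹ = fromBlocks P⁻¹ 0 0 Q⁻¹ := by
  simp [inv_fromBlocks_zero₁₂_of_isUnit_iff P 0 Q (iff_of_true hP hQ)]

namespace BlockDiagEquiv

variable {B B' B'' : Matrix (m ⊕ n) (m ⊕ n) R}

theorem symm (h : BlockDiagEquiv B B') : BlockDiagEquiv B' B := by
  obtain ⟨N₁, N₂, M₁, M₂, hN₁, hN₂, hM₁, hM₂, rfl⟩ := h
  have hN : IsUnit (fromBlocks N₁ 0 0 N₂).det :=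
    (isUnit_iff_isUnit_det _).1 (isUnit_fromBlocks_zero₁₂.2 ⟨hN₁, hN₂⟩)
  have hM : IsUnit (fromBlocks M₁ 0 0 M₂).det :=
    (isUnit_iff_isUnit_det _).1 (isUnit_fromBlocks_zero₁₂.2 ⟨hM₁, hM₂⟩)
  refine ⟨N₁⁻¹, N₂⁻¹, M₁⁻¹, M₂⁻¹, isUnit_nonsing_inv_iff.2 hN₁, isUnit_nonsing_inv_iff.2 hN₂,
    isUnit_nonsing_inv_iff.2 hM₁, isUnit_nonsing_inv_iff.2 hM₂, ?_⟩
  rw [← inv_fromBlocks_zero_zero hN₁ hN₂, ← inv_fromBlocks_zero_zero hM₁ hM₂, Matrix.mul_assoc,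
    mul_nonsing_inv_cancel_right _ _ hM, nonsing_inv_mul_cancel_left _ _ hN]

theorem trans (h : BlockDiagEquiv B B') (h' : BlockDiagEquiv B' B'') : BlockDiagEquiv B B'' := by
  obtain ⟨N₁, N₂, M₁, M₂, hN₁, hN₂, hM₁, hM₂, rfl⟩ := h
  obtain ⟨N₁', N₂', M₁', M₂', hN₁', hN₂', hM₁', hM₂', rfl⟩ := h'
  refine ⟨N₁' * N₁, N₂' * N₂, M₁ * M₁', M₂ * M₂', hN₁'.mul hN₁, hN₂'.mul hN₂, hM₁.mul hM₁',
    hM₂.mul hM₂', ?_⟩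
  have hN : fromBlocks (N₁' * N₁) 0 0 (N₂' * N₂) =
      fromBlocks N₁' 0 0 N₂' * fromBlocks N₁ 0 0 N₂ := by simp [fromBlocks_multiply]
  have hM : fromBlocks (M₁ * M₁') 0 0 (M₂ * M₂') =
      fromBlocks M₁ 0 0 M₂ * fromBlocks M₁' 0 0 M₂' := by simp [fromBlocks_multiply]
  simp only [hN, hM, Matrix.mul_assoc]

theorem inv_transpose (h : BlockDiagEquiv B B') : BlockDiagEquiv B⁻¹ᵀ B'⁻¹ᵀ := by
  obtain ⟨N₁, N₂, M₁, M₂, hN₁, hN₂, hM₁, hM₂, rfl⟩ := h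
  refine ⟨N₁⁻¹ᵀ, N₂⁻¹ᵀ, M₁⁻¹ᵀ, M₂⁻¹ᵀ, ?_, ?_, ?_, ?_, ?_⟩
  iterate 4 simpa only [isUnit_transpose, isUnit_nonsing_inv_iff]
  simp [Matrix.mul_inv_rev, inv_fromBlocks_zero_zero, hN₁, hN₂, hM₁, hM₂, fromBlocks_transpose,
    Matrix.mul_assoc]

end BlockDiagEquiv

/-- The standard form `(1, 1; A, 1)` of a matrix with four square blocks of the same size. -/
def standardForm (A : Matrix n n R) : Matrix (n ⊕ n) (n ⊕ n) R :=
  fromBlocks 1 1 A 1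

/-- The normal-form matrix `A = B₂₁ B₁₁⁻¹ B₁₂ B₂₂⁻¹` associated with `B`. It is meaningful when
`B₁₁` and `B₂₂` are invertible; otherwise an inverse in it is zero. -/
noncomputable def normalFormMatrix (B : Matrix (n ⊕ n) (n ⊕ n) R) : Matrix n n R :=
  B.toBlocks₂₁ * B.toBlocks₁₁⁻¹ * B.toBlocks₁₂ * B.toBlocks₂₂⁻¹

theorem blockDiagEquiv_standardForm {B : Matrix (n ⊕ n) (n ⊕ n) R}
    (h11 : IsUnit B.toBlocks₁₁) (h12 : IsUnit B.toBlocks₁₂) (h22 : IsUnit B.toBlocks₂₂) :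
    BlockDiagEquiv B (standardForm (normalFormMatrix B)) := by
  refine ⟨B.toBlocks₂₂ * B.toBlocks₁₂⁻¹, 1, B.toBlocks₁₁⁻¹ * B.toBlocks₁₂ * B.toBlocks₂₂⁻¹,
    B.toBlocks₂₂⁻¹, h22.mul (isUnit_nonsing_inv_iff.2 h12), isUnit_one,
    ((isUnit_nonsing_inv_iff.2 h11).mul h12).mul (isUnit_nonsing_inv_iff.2 h22),
    isUnit_nonsing_inv_iff.2 h22, ?_⟩
  rw [isUnit_iff_isUnit_det] at h11 h12 h22
  conv_rhs => rw [← fromBlocks_toBlocks B]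
  simp [standardForm, normalFormMatrix, fromBlocks_multiply, Matrix.mul_assoc, h11, h12, h22]

theorem blockDiagEquiv_standardForm_of_isConj {A A' : Matrix n n R} (h : IsConj A A') :
    BlockDiagEquiv (standardForm A) (standardForm A') := by
  obtain ⟨P, hP⟩ := h
  have hA' : P.val * A * P⁻¹.val = A' := by rw [hP.eq, Units.mul_inv_cancel_right]
  refine ⟨P, P, P⁻¹.val, P⁻¹.val, P.isUnit, P.isUnit, P⁻¹.isUnit, P⁻¹.isUnit, ?_⟩
  simp [standardForm, fromBlocks_multiply, hA', -coe_units_inv]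

theorem inv_standardForm {A : Matrix n n R} (hA1 : IsUnit (A - 1)) :
    (standardForm A)⁻¹ =
      fromBlocks (-(A - 1)⁻¹) (A - 1)⁻¹ ((A - 1)⁻¹ * A) (-(A - 1)⁻¹) := by
  refine inv_eq_left_inv ?_
  have hE : (A - 1)⁻¹ * A - (A - 1)⁻¹ = 1 := by
    rw [← mul_sub_one, nonsing_inv_mul _ ((isUnit_iff_isUnit_det _).1 hA1)]
  simp [standardForm, fromBlocks_multiply, neg_add_eq_sub, ← sub_eq_add_neg, hE]

theorem normalFormMatrix_standardForm_inv_transpose {A : Matrix n n R} (hA1 : IsUnit (A - 1)) :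
    normalFormMatrix (standardForm A)⁻¹ᵀ = Aᵀ := by
  have hE : IsUnit (A - 1)⁻¹ᵀ.det :=
    (isUnit_iff_isUnit_det _).1 ((isUnit_transpose _).2 (isUnit_nonsing_inv_iff.2 hA1))
  have hneg : (-(A - 1)⁻¹ᵀ)⁻¹ = -((A - 1)⁻¹ᵀ)⁻¹ :=
    inv_eq_left_inv (by rw [neg_mul_neg, nonsing_inv_mul _ hE])
  simp only [normalFormMatrix, inv_standardForm hA1, fromBlocks_transpose, transpose_neg,
    transpose_mul, toBlocks_fromBlocks₁₁, toBlocks_fromBlocks₁₂, toBlocks_fromBlocks₂₁,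
    toBlocks_fromBlocks₂₂, hneg, mul_neg, neg_mul, neg_neg]
  rw [mul_nonsing_inv _ hE, Matrix.one_mul, mul_nonsing_inv_cancel_right _ _ hE]

theorem standardForm_inv_transpose_blockDiagEquiv {A : Matrix n n R} (hA : IsUnit A)
    (hA1 : IsUnit (A - 1)) :
    BlockDiagEquiv (standardForm A)⁻¹ᵀ (standardForm Aᵀ) := by
  have hE : IsUnit (A - 1)⁻¹ᵀ := (isUnit_transpose _).2 (isUnit_nonsing_inv_iff.2 hA1)
  rw [← normalFormMatrix_standardForm_inv_transpose hA1]
  apply blockDiagEquiv_standardForm <;> rw [inv_standardForm hA1, fromBlocks_transpose]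
  · simpa using hE.neg
  · simpa using ((isUnit_transpose A).2 hA).mul hE
  · simpa using hE.neg

theorem generic_B_and_inverse_transpose_in_same_block_diagonal_orbit_general
    {B : Matrix (n ⊕ n) (n ⊕ n) R}
    (h11 : IsUnit B.toBlocks₁₁) (h12 : IsUnit B.toBlocks₁₂) (h22 : IsUnit B.toBlocks₂₂)
    (hA : IsUnit (normalFormMatrix B)) (hA1 : IsUnit (normalFormMatrix B - 1))
    (hconj : IsConj (normalFormMatrix B) (normalFormMatrix B)ᵀ) :
    BlockDiagEquiv B B⁻¹ᵀ := by
  have hB := blockDiagEquiv_standardForm h11 h12 h22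
  have hBinv : BlockDiagEquiv B⁻¹ᵀ (standardForm (normalFormMatrix B)ᵀ) :=
    hB.inv_transpose.trans (standardForm_inv_transpose_blockDiagEquiv hA hA1)
  exact (hB.trans (blockDiagEquiv_standardForm_of_isConj hconj)).trans hBinv.symm

end BlockDiagonalOrbits

theorem generic_B_and_inverse_transpose_in_same_block_diagonal_orbit
    (k : ℕ) (hk : 1 ≤ k) (B : Matrix (Fin k ⊕ Fin k) (Fin k ⊕ Fin k) ℂ)
    (hB : IsUnit B)
    (h11 : IsUnit B.toBlocks₁₁) (h12 : IsUnit B.toBlocks₁₂) (h22 : IsUnit B.toBlocks₂₂) :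
    let A := B.toBlocks₂₁ * B.toBlocks₁₁⁻¹ * B.toBlocks₁₂ * B.toBlocks₂₂⁻¹
    IsUnit A → IsUnit (A - 1) → Aᵀ = A →
      ∃ N₁ N₂ M₁ M₂ : Matrix (Fin k) (Fin k) ℂ,
        IsUnit N₁ ∧ IsUnit N₂ ∧ IsUnit M₁ ∧ IsUnit M₂ ∧
        (B⁻¹)ᵀ = Matrix.fromBlocks N₁ 0 0 N₂ * B * Matrix.fromBlocks M₁ 0 0 M₂ := by
  intro A hA hA1 hT
  exact generic_B_and_inverse_transpose_in_same_block_diagonal_orbit_general h11 h12 h22 hA hA1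
    (hT.symm ▸ IsConj.refl A)
end
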